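/- Let S be a closed convex subset of ℝ^n, F a face of S, and x₀ a point in the relative interior of F. Then F consists exactly of x₀ together with those points x ∈ S \ {x₀} such that x₀ lies in the relative interior of g(x,x₀) ∩ S, where g(x,x₀) denotes the affine line through x and x₀. -/

import Mathlib

open MvPolynomial

/-- A face of a convex set `S ⊆ ℝⁿ`: a nonempty convex subset `F ⊆ S` such that whenever
`x, y ∈ S`, `λ ∈ (0,1)` and `λx + (1-λ)y ∈ F`, then `x, y ∈ F`. -/
def IsFaceOf {n : ℕ} (S F : Set (Fin n → ℝ)) : Prop :=
  F.Nonempty ∧ Convex ℝ F ∧ F ⊆ S ∧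
    ∀ x ∈ S, ∀ y ∈ S, ∀ l : ℝ, 0 < l → l < 1 →
      l • x + (1 - l) • y ∈ F → x ∈ F ∧ y ∈ F

/-- The affine-linear function `x ↦ c + a·x` on `ℝⁿ`. -/
def affEval {n : ℕ} (a : Fin n → ℝ) (c : ℝ) (x : Fin n → ℝ) : ℝ :=
  c + ∑ i, a i * x i

/-- `F` is an exposed face of `S`: either `F = S` or there is a nonzero affine-linear
function `ℓ` with `ℓ ≥ 0` on `S`, `{ℓ = 0} ∩ S ≠ ∅` and `{ℓ = 0} ∩ S = F`. -/
def IsExposedFaceOf {n : ℕ} (S F : Set (Fin n → ℝ)) : Prop :=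
  F = S ∨ ∃ (a : Fin n → ℝ) (c : ℝ), affEval a c ≠ 0 ∧
    (∀ x ∈ S, 0 ≤ affEval a c x) ∧
    ({x | affEval a c x = 0} ∩ S).Nonempty ∧
    {x | affEval a c x = 0} ∩ S = F

/-!
The segment from a point `x` of a set to a relatively interior point `x₀` can be prolonged beyond
`x₀` inside the set. For `x ∈ F` the prolonged segment lies in `S`, and it is a neighbourhood of
`x₀` in the line through `x` and `x₀`. Conversely, if `x₀` is relatively interior to the trace of
`S` on that line, then the prolonged segment has both ends in `S` and the point `x₀ ∈ F` strictly
between them, so its ends lie in `F` by extremality.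
-/

open Set Filter Topology AffineMap

section AddTorsor

variable {𝕜 V P : Type*} [Ring 𝕜] [AddCommGroup V] [Module 𝕜 V] [TopologicalSpace P]
  [AddTorsor V P] {s : Set P} {x : P}

theorem mem_intrinsicInterior_iff_mem_nhdsWithin :
    x ∈ intrinsicInterior 𝕜 s ↔ x ∈ affineSpan 𝕜 s ∧ s ∈ 𝓝[affineSpan 𝕜 s] x := by
  simp only [mem_intrinsicInterior, mem_interior_iff_mem_nhds, Subtype.exists, exists_and_right,
    exists_eq_right]
  rw [← exists_prop]
  exact exists_congr fun _ ↦ preimage_coe_mem_nhds_subtype (s := (affineSpan 𝕜 s : Set P))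

theorem mem_intrinsicInterior_of_mem_nhdsWithin {Q : AffineSubspace 𝕜 P} (hx : x ∈ Q)
    (hsQ : s ⊆ Q) (hs : s ∈ 𝓝[Q] x) : x ∈ intrinsicInterior 𝕜 s :=
  mem_intrinsicInterior_iff_mem_nhdsWithin.2
    ⟨subset_affineSpan 𝕜 s (mem_of_mem_nhdsWithin hx hs),
      nhdsWithin_mono x (affineSpan_le.2 hsQ) hs⟩

end AddTorsor

section Line

variable {R V P : Type*} [Ring R] [AddCommGroup V] [Module R V] [AddTorsor V P]

theorem coe_line_eq_range_lineMap (p q : P) :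
    (line[R, p, q] : Set P) = range (lineMap p q : R → P) :=
  Set.ext fun _ ↦ mem_affineSpan_pair_iff_exists_lineMap_eq

theorem setOf_exists_eq_add_smul_sub (x y : V) :
    {z | ∃ t : R, z = x + t • (y - x)} = line[R, x, y] := by
  ext z
  simp only [mem_ofPred_eq, coe_line_eq_range_lineMap, mem_range, lineMap_apply_module',
    add_comm x, eq_comm]

end Line

section TopologicalVectorSpace

variable {E : Type*} [AddCommGroup E] [Module ℝ E] [TopologicalSpace E] [IsTopologicalAddGroup E]
  [ContinuousSMul ℝ E] {s : Set E} {x y a b : E}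

theorem eventually_lineMap_mem_of_mem_intrinsicInterior (hx : x ∈ s)
    (hy : y ∈ intrinsicInterior ℝ s) : ∀ᶠ t in 𝓝 (1 : ℝ), lineMap x y t ∈ s := by
  obtain ⟨hy_span, hs⟩ := mem_intrinsicInterior_iff_mem_nhdsWithin.1 hy
  have lineMap_tendsto : Tendsto (lineMap x y : ℝ → E) (𝓝 1) (𝓝 y) :=
    lineMap_continuous.tendsto' 1 y (lineMap_apply_one x y)
  have lineMap_mem_span (t : ℝ) : lineMap x y t ∈ affineSpan ℝ s :=
    lineMap_mem t (subset_affineSpan ℝ s hx) hy_span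
  exact tendsto_nhdsWithin_iff.2 ⟨lineMap_tendsto, .of_forall lineMap_mem_span⟩ hs

theorem exists_mem_openSegment_of_mem_intrinsicInterior (hx : x ∈ s)
    (hy : y ∈ intrinsicInterior ℝ s) : ∃ z ∈ s, y ∈ openSegment ℝ x z := by
  have beyond_mem : ∀ᶠ t in 𝓝[>] (1 : ℝ), lineMap x y t ∈ s :=
    nhdsWithin_le_nhds (eventually_lineMap_mem_of_mem_intrinsicInterior hx hy)
  obtain ⟨t, hts, ht⟩ := (beyond_mem.and eventually_mem_nhdsWithin).exists
  have ht_pos : 0 < t := one_pos.trans ht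
  refine ⟨lineMap x y t, hts, ?_⟩
  rw [openSegment_eq_image_lineMap]
  refine ⟨t⁻¹, ⟨inv_pos.2 ht_pos, inv_lt_one_of_one_lt₀ ht⟩, ?_⟩
  rw [lineMap_lineMap_right, inv_mul_cancel₀ ht_pos.ne', lineMap_apply_one]

variable [T2Space E]

theorem isEmbedding_lineMap (hab : a ≠ b) : IsEmbedding (lineMap a b : ℝ → E) := by
  have smul_isEmbedding : IsEmbedding fun t : ℝ ↦ t • (b - a) :=
    (isClosedEmbedding_smul_left (sub_ne_zero.2 hab.symm)).isEmbedding
  simpa only [Function.comp_def, Homeomorph.coe_addRight, ← lineMap_apply_module'] using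
    (Homeomorph.addRight a).isEmbedding.comp smul_isEmbedding

theorem segment_mem_nhdsWithin_line (hx : x ∈ openSegment ℝ a b) :
    segment ℝ a b ∈ 𝓝[line[ℝ, a, b]] x := by
  rcases eq_or_ne a b with rfl | hab
  · rw [openSegment_same, mem_singleton_iff] at hx
    simp [hx]
  · rw [openSegment_eq_image_lineMap] at hx
    obtain ⟨t, ht, rfl⟩ := hx
    rw [coe_line_eq_range_lineMap, ← (isEmbedding_lineMap hab).map_nhds_eq,
      segment_eq_image_lineMap]
    exact image_mem_map (Icc_mem_nhds ht.1 ht.2)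

theorem mem_intrinsicInterior_line_inter (hx : x ∈ openSegment ℝ a b)
    (hs : segment ℝ a b ⊆ s) : x ∈ intrinsicInterior ℝ (line[ℝ, a, x] ∩ s) := by
  have x_wbtw : Wbtw ℝ a x b := mem_segment_iff_wbtw.1 (openSegment_subset_segment ℝ a b hx)
  have line_eq : line[ℝ, a, x] = line[ℝ, a, b] := by
    rcases eq_or_ne a x with rfl | hax
    · rw [left_mem_openSegment_iff.1 hx]
    · exact le_antisymm
        (affineSpan_pair_le_of_mem_of_mem (left_mem_affineSpan_pair ℝ a b) x_wbtw.mem_affineSpan)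
        (affineSpan_pair_le_of_mem_of_mem (left_mem_affineSpan_pair ℝ a x)
          (x_wbtw.right_mem_affineSpan_of_left_ne hax))
  have s_mem : s ∈ 𝓝[line[ℝ, a, x]] x :=
    line_eq ▸ mem_of_superset (segment_mem_nhdsWithin_line hx) hs
  exact mem_intrinsicInterior_of_mem_nhdsWithin (right_mem_affineSpan_pair ℝ a x)
    inter_subset_left (inter_mem self_mem_nhdsWithin s_mem)

theorem face_eq_relativeInterior_description_general {S F : Set E} (hF : IsExtreme ℝ S F)
    (hFconv : Convex ℝ F) {x₀ : E} (hx₀ : x₀ ∈ intrinsicInterior ℝ F) :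
    F = insert x₀ {x | x ∈ S ∧ x ≠ x₀ ∧ x₀ ∈ intrinsicInterior ℝ (line[ℝ, x, x₀] ∩ S)} := by
  have hx₀F : x₀ ∈ F := intrinsicInterior_subset hx₀
  refine Subset.antisymm (fun x hxF ↦ ?_) (insert_subset hx₀F ?_)
  · rcases eq_or_ne x x₀ with rfl | hne
    · exact mem_insert x _
    obtain ⟨y, hyF, hx₀_between⟩ := exists_mem_openSegment_of_mem_intrinsicInterior hxF hx₀
    have segment_subset : segment ℝ x y ⊆ S := (hFconv.segment_subset hxF hyF).trans hF.subset
    exact .inr ⟨hF.subset hxF, hne, mem_intrinsicInterior_line_inter hx₀_between segment_subset⟩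
  · rintro x ⟨hxS, -, hx₀_line⟩
    have hx_line : x ∈ (line[ℝ, x, x₀] : Set E) ∩ S := ⟨left_mem_affineSpan_pair ℝ x x₀, hxS⟩
    obtain ⟨y, ⟨-, hyS⟩, hx₀_between⟩ :=
      exists_mem_openSegment_of_mem_intrinsicInterior hx_line hx₀_line
    exact hF.left_mem_of_mem_openSegment hxS hyS hx₀F hx₀_between

end TopologicalVectorSpace

theorem IsFaceOf.isExtreme {n : ℕ} {S F : Set (Fin n → ℝ)} (hF : IsFaceOf S F) :
    IsExtreme ℝ S F where
  subset := hF.2.2.1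
  left_mem_of_mem_openSegment := by
    rintro x hxS y hyS _ hzF ⟨a, b, ha, hb, hab, rfl⟩
    obtain rfl : b = 1 - a := eq_sub_of_add_eq' hab
    exact (hF.2.2.2 x hxS y hyS a ha (sub_pos.1 hb) hzF).1

/-- Let `S ⊆ ℝⁿ` be closed convex, `F` a face of `S` and `x₀` a point in
the relative interior of `F`.  Then `F` consists exactly of `x₀` together with those
`x ∈ S \ {x₀}` such that `x₀` lies in the relative interior of `g(x,x₀) ∩ S`, where
`g(x,x₀)` is the affine line through `x` and `x₀`. -/
theorem face_eq_relativeInterior_description {n : ℕ} (S : Set (Fin n → ℝ))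
    (hclosed : IsClosed S) (hconv : Convex ℝ S)
    (F : Set (Fin n → ℝ)) (hF : IsFaceOf S F)
    (x0 : Fin n → ℝ) (hx0 : x0 ∈ intrinsicInterior ℝ F) :
    F = insert x0 {x | x ∈ S ∧ x ≠ x0 ∧
      x0 ∈ intrinsicInterior ℝ ({y | ∃ t : ℝ, y = x + t • (x0 - x)} ∩ S)} := by
  simpa only [setOf_exists_eq_add_smul_sub] using
    face_eq_relativeInterior_description_general hF.isExtreme hF.2.1 hx0
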